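/- Let G be a balanced complete bipartite graph whose edges are coloured red and blue by a proper split colouring. Then V(G) can be partitioned into the vertex sets of three pairwise vertex-disjoint monochromatic paths, and also into the vertex sets of three pairwise vertex-disjoint monochromatic cycles. -/

import Mathlib

open SimpleGraph Set

/- Convention: colour `true` is red, colour `false` is blue. -/

/-- The subgraph of `G` consisting of the edges of colour `b`. -/
def monoSubgraph {V : Type*} (G : SimpleGraph V) (c : Sym2 V → Bool) (b : Bool) :
    SimpleGraph V :=
  SimpleGraph.fromEdgeSet {e | e ∈ G.edgeSet ∧ c e = b}

/-- `S` is the vertex set of a (possibly empty, possibly trivial) path of `G`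
all of whose edges have colour `b`. -/
def IsMonoPathSet {V : Type*} (G : SimpleGraph V) (c : Sym2 V → Bool) (b : Bool)
    (S : Set V) : Prop :=
  S = ∅ ∨ ∃ (u v : V) (p : G.Walk u v), p.IsPath ∧ (∀ e ∈ p.edges, c e = b) ∧
    S = {x | x ∈ p.support}

/-- `S` is the vertex set of a (possibly degenerate: empty, single vertex or single edge)
cycle of `G` all of whose edges have colour `b`. -/
def IsMonoCycleSet {V : Type*} (G : SimpleGraph V) (c : Sym2 V → Bool) (b : Bool)
    (S : Set V) : Prop :=
  S = ∅ ∨ (∃ v, S = {v}) ∨ (∃ u v, G.Adj u v ∧ c s(u, v) = b ∧ S = {u, v}) ∨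
    ∃ (v : V) (p : G.Walk v v), p.IsCycle ∧ (∀ e ∈ p.edges, c e = b) ∧
      S = {x | x ∈ p.support}

/-- `M` is a matching of `G` in colour `b` which is connected, i.e. all its edges lie in one
connected component of the subgraph formed by the edges of colour `b`. -/
def IsConnMatching {V : Type*} (G : SimpleGraph V) (c : Sym2 V → Bool) (b : Bool)
    (M : Set (Sym2 V)) : Prop :=
  (∀ e ∈ M, e ∈ G.edgeSet ∧ c e = b) ∧
  (∀ e ∈ M, ∀ f ∈ M, e ≠ f → ∀ x, x ∈ e → x ∉ f) ∧
  (∀ e ∈ M, ∀ f ∈ M, ∀ x, x ∈ e → ∀ y, y ∈ f → (monoSubgraph G c b).Reachable x y)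

/-- The set of vertices covered by a set of edges. -/
def matchSupport {V : Type*} (M : Set (Sym2 V)) : Set V := {x | ∃ e ∈ M, x ∈ e}

/-- The colouring `c` of the (bipartite, with classes `U` and `W`) graph `G` is a split
colouring: `U = A ∪ B`, `W = C ∪ D`, the edges between `A,C` and between `B,D` are blue
(`false`), and the edges between `A,D` and between `B,C` are red (`true`). -/
def IsSplitColouring {V : Type*} (G : SimpleGraph V) (c : Sym2 V → Bool)
    (U W : Set V) : Prop :=
  ∃ A B C D : Set V,
    A ∪ B = U ∧ Disjoint A B ∧ C ∪ D = W ∧ Disjoint C D ∧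
    (∀ u v, G.Adj u v →
      (((u ∈ A ∧ v ∈ C) ∨ (u ∈ C ∧ v ∈ A) ∨ (u ∈ B ∧ v ∈ D) ∨ (u ∈ D ∧ v ∈ B)) →
        c s(u, v) = false)) ∧
    (∀ u v, G.Adj u v →
      (((u ∈ A ∧ v ∈ D) ∨ (u ∈ D ∧ v ∈ A) ∨ (u ∈ B ∧ v ∈ C) ∨ (u ∈ C ∧ v ∈ B)) →
        c s(u, v) = true))

/-- The colouring `c` of `G` is `δ`-close to a split colouring: one can delete at most
`δ|E(G)|` edges so that the remaining graph is bipartite and the colouring on it is a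
split colouring. -/
def CloseToSplit {V : Type*} (G : SimpleGraph V) (c : Sym2 V → Bool) (δ : ℝ) : Prop :=
  ∃ F : Set (Sym2 V), F ⊆ G.edgeSet ∧ (F.ncard : ℝ) ≤ δ * (G.edgeSet.ncard : ℝ) ∧
    ∃ U W : Set V, U ∪ W = Set.univ ∧ Disjoint U W ∧
      (∀ u v, (G.deleteEdges F).Adj u v → ((u ∈ U ∧ v ∈ W) ∨ (u ∈ W ∧ v ∈ U))) ∧
      IsSplitColouring (G.deleteEdges F) c U W

/-!
A monochromatic complete bipartite graph with classes of equal size has a Hamiltonian path between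
any two vertices of different classes, and closing it up gives a Hamiltonian cycle (degenerate if
the classes are singletons). It therefore suffices to cut `V` into three such balanced bicliques.

By symmetry `|C| ≤ |A|`, and then `|B| ≤ |D|` because the two sides are balanced. Choose `A' ⊆ A`
with `|A'| = |C|` and `D' ⊆ D` with `|D'| = |B|`. The pairs `(A', C)` and `(B, D')` are blue
balanced bicliques, and what remains is the red pair `(A \ A', D \ D')`, balanced because both
sides lost equally many vertices.
-/

section

open scoped Function

variable {V : Type*} {G : SimpleGraph V} {c : Sym2 V → Bool} {b : Bool}

theorem pairwise_disjoint_vec_three {α : Type*} [PartialOrder α] [OrderBot α] {x y z : α}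
    (hxy : Disjoint x y) (hxz : Disjoint x z) (hyz : Disjoint y z) :
    Pairwise (Disjoint on ![x, y, z]) := by
  intro i j hij
  fin_cases i <;> fin_cases j <;> simp_all [Function.onFun, disjoint_comm]

theorem iUnion_vec_three {α : Type*} (s t u : Set α) : ⋃ i, ![s, t, u] i = s ∪ t ∪ u := by
  ext
  simp [Fin.exists_fin_succ, or_assoc]

theorem pairwise_disjoint_sup {ι α : Type*} [DistribLattice α] [OrderBot α] {s t : ι → α}
    (hs : Pairwise (Disjoint on s)) (ht : Pairwise (Disjoint on t))
    (hst : ∀ i j, Disjoint (s i) (t j)) : Pairwise (Disjoint on (s ⊔ t)) :=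
  fun i j hij ↦ ((hs hij).sup_right (hst i j)).sup_left ((hst j i).symm.sup_right (ht hij))

theorem exists_isPath_support_eq_union {n : ℕ} {X Y : Set V} {x y : V}
    (hXY : G.IsCompleteBetween X Y) (hX : X.ncard = n + 1) (hY : Y.ncard = n + 1)
    (hx : x ∈ X) (hy : y ∈ Y) :
    ∃ p : G.Walk x y, p.IsPath ∧ {z | z ∈ p.support} = X ∪ Y := by
  induction n generalizing X Y x y with
  | zero =>
    obtain ⟨x, rfl⟩ := ncard_eq_one.1 hX
    obtain ⟨y, rfl⟩ := ncard_eq_one.1 hY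
    rw [mem_singleton_iff] at hx hy
    subst hx hy
    exact ⟨(hXY rfl rfl).toWalk, .of_adj _, by ext; simp [or_comm]⟩
  | succ n ih =>
    have hX' : (X \ {x}).ncard = n + 1 := by rw [ncard_sdiff_singleton_of_mem hx, hX]; rfl
    have hY' : (Y \ {y}).ncard = n + 1 := by rw [ncard_sdiff_singleton_of_mem hy, hY]; rfl
    obtain ⟨x', hx'⟩ : (X \ {x}).Nonempty := nonempty_of_ncard_ne_zero (by lia)
    obtain ⟨y', hy'⟩ : (Y \ {y}).Nonempty := nonempty_of_ncard_ne_zero (by lia)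
    -- Exchanging the roles of the classes makes the shorter path start in `Y` and end in `X`,
    -- so that `x` can be prepended and `y` appended.
    obtain ⟨p, hp, hsupp⟩ :=
      ih (fun _ hv _ hu ↦ (hXY hu.1 hv.1).symm) hY' hX' hy' hx'
    have hxY : x ∉ Y := disjoint_left.1 hXY.disjoint hx
    have hyX : y ∉ X := disjoint_right.1 hXY.disjoint hy
    have mem_support (z : V) : z ∈ p.support ↔ z ∈ Y \ {y} ∪ X \ {x} := Set.ext_iff.1 hsupp z
    refine ⟨.cons (hXY hx hy'.1) (p.concat (hXY hx'.1 hy)), ?_, ?_⟩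
    · refine (hp.concat ?_ _).cons ?_
      · simp [mem_support, hyX]
      · simp [Walk.support_concat, mem_support, hxY, (hXY hx hy).ne]
    · ext z
      simp only [Walk.support_cons, Walk.support_concat, mem_ofPred_eq, List.mem_cons,
        List.mem_append, mem_support, mem_union, mem_sdiff, mem_singleton_iff]
      grind

theorem monoSubgraph_adj {u v : V} :
    (monoSubgraph G c b).Adj u v ↔ G.Adj u v ∧ c s(u, v) = b := by
  simp only [monoSubgraph, fromEdgeSet_adj, mem_ofPred_eq, mem_edgeSet]
  exact and_iff_left_of_imp fun h ↦ h.1.ne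

theorem monoSubgraph_le : monoSubgraph G c b ≤ G :=
  fun _ _ h ↦ (monoSubgraph_adj.1 h).1

theorem colour_eq_of_mem_edges_mapLe {u v : V} (p : (monoSubgraph G c b).Walk u v) :
    ∀ e ∈ (p.mapLe monoSubgraph_le).edges, c e = b := by
  rw [Walk.edges_mapLe_eq_edges]
  rintro ⟨x, y⟩ he
  exact (monoSubgraph_adj.1 (p.adj_of_mem_edges he)).2

theorem isMonoPathSet_support {u v : V} {p : (monoSubgraph G c b).Walk u v} (hp : p.IsPath) :
    IsMonoPathSet G c b {x | x ∈ p.support} :=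
  .inr ⟨u, v, p.mapLe monoSubgraph_le, hp.mapLe _, colour_eq_of_mem_edges_mapLe p, by simp⟩

theorem isMonoCycleSet_support_of_adj {u v : V} {p : (monoSubgraph G c b).Walk u v} (hp : p.IsPath)
    (hvu : (monoSubgraph G c b).Adj v u) : IsMonoCycleSet G c b {x | x ∈ p.support} := by
  by_cases he : s(u, v) ∈ p.edges
  · -- A path through the edge joining its own ends is that edge alone, a degenerate cycle.
    obtain ⟨huv, hcol⟩ := monoSubgraph_adj.1 hvu.symm
    refine .inr (.inr (.inl ⟨u, v, huv, hcol, ?_⟩))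
    rw [hp.eq_adj_toWalk_of_mem_edges he]
    ext
    simp
  · have hcycle : (Walk.cons hvu p).IsCycle :=
      (Walk.cons_isCycle_iff p hvu).2 ⟨hp, by rwa [Sym2.eq_swap]⟩
    refine .inr (.inr (.inr ⟨v, (Walk.cons hvu p).mapLe monoSubgraph_le, hcycle.mapLe _,
      colour_eq_of_mem_edges_mapLe _, ?_⟩))
    ext x
    simp only [Walk.support_mapLe_eq_support, Walk.support_cons, List.mem_cons, mem_ofPred_eq]
    exact ⟨.inr, (·.elim (fun h ↦ h ▸ p.end_mem_support) id)⟩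

/-- `S` is the vertex set of a balanced complete bipartite subgraph of `G`, possibly empty, all of
whose edges have colour `b`. The classes are compared by `Set.ncard`, so the notion is meant for
finite vertex sets. -/
def IsMonoBalancedBicliqueSet (G : SimpleGraph V) (c : Sym2 V → Bool) (b : Bool) (S : Set V) :
    Prop :=
  ∃ X Y : Set V, (monoSubgraph G c b).IsCompleteBetween X Y ∧ X.ncard = Y.ncard ∧ S = X ∪ Y

section Finite

variable [Finite V]

theorem IsMonoBalancedBicliqueSet.eq_empty_or_exists_isPath {S : Set V}
    (hS : IsMonoBalancedBicliqueSet G c b S) :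
    S = ∅ ∨ ∃ (u v : V) (p : (monoSubgraph G c b).Walk u v),
      p.IsPath ∧ (monoSubgraph G c b).Adj v u ∧ {x | x ∈ p.support} = S := by
  obtain ⟨X, Y, hXY, hcard, rfl⟩ := hS
  cases hX : X.ncard with
  | zero =>
    rw [hX, eq_comm, ncard_eq_zero] at hcard
    rw [ncard_eq_zero] at hX
    exact .inl (by rw [hX, hcard, union_self])
  | succ n =>
    obtain ⟨x, hx⟩ : X.Nonempty := nonempty_of_ncard_ne_zero (by lia)
    obtain ⟨y, hy⟩ : Y.Nonempty := nonempty_of_ncard_ne_zero (by lia)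
    obtain ⟨p, hp, hsupp⟩ := exists_isPath_support_eq_union hXY hX (hcard ▸ hX) hx hy
    exact .inr ⟨x, y, p, hp, (hXY hx hy).symm, hsupp⟩

theorem IsMonoBalancedBicliqueSet.isMonoPathSet {S : Set V}
    (hS : IsMonoBalancedBicliqueSet G c b S) : IsMonoPathSet G c b S := by
  obtain rfl | ⟨u, v, p, hp, -, rfl⟩ := hS.eq_empty_or_exists_isPath
  exacts [.inl rfl, isMonoPathSet_support hp]

theorem IsMonoBalancedBicliqueSet.isMonoCycleSet {S : Set V}
    (hS : IsMonoBalancedBicliqueSet G c b S) : IsMonoCycleSet G c b S := by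
  obtain rfl | ⟨u, v, p, hp, hvu, rfl⟩ := hS.eq_empty_or_exists_isPath
  exacts [.inl rfl, isMonoCycleSet_support_of_adj hp hvu]

theorem exists_partition_three_bicliques_of_ncard_le {A B C D : Set V} {b₁ b₂ b₃ : Bool}
    (hAB : Disjoint A B) (hCD : Disjoint C D) (hcompl : IsCompl (A ∪ B) (C ∪ D))
    (hcard : (A ∪ B).ncard = (C ∪ D).ncard) (hCA : C.ncard ≤ A.ncard)
    (hAC : (monoSubgraph G c b₁).IsCompleteBetween A C)
    (hAD : (monoSubgraph G c b₂).IsCompleteBetween A D)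
    (hBD : (monoSubgraph G c b₃).IsCompleteBetween B D) :
    ∃ S : Fin 3 → Set V, (∀ i, ∃ b, IsMonoBalancedBicliqueSet G c b (S i)) ∧
      Pairwise (Disjoint on S) ∧ ⋃ i, S i = univ := by
  rw [ncard_union_eq hAB, ncard_union_eq hCD] at hcard
  obtain ⟨A', hA', hA'C⟩ := exists_subset_card_eq hCA
  obtain ⟨D', hD', hD'B⟩ := exists_subset_card_eq (show B.ncard ≤ D.ncard by lia)
  have hdiff : (A \ A').ncard = (D \ D').ncard := by
    rw [ncard_sdiff hA', ncard_sdiff hD']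
    lia
  have hP : ⋃ i, ![A', A \ A', B] i = A ∪ B := by
    rw [iUnion_vec_three, union_sdiff_cancel hA']
  have hQ : ⋃ i, ![C, D \ D', D'] i = C ∪ D := by
    rw [iUnion_vec_three, union_assoc, sdiff_union_of_subset hD']
  refine ⟨![A', A \ A', B] ⊔ ![C, D \ D', D'], ?_, pairwise_disjoint_sup ?_ ?_ ?_, ?_⟩
  · intro i
    fin_cases i
    exacts [⟨b₁, A', C, fun _ hu _ hv ↦ hAC (hA' hu) hv, hA'C, rfl⟩,
      ⟨b₂, A \ A', D \ D', fun _ hu _ hv ↦ hAD hu.1 hv.1, hdiff, rfl⟩,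
      ⟨b₃, B, D', fun _ hu _ hv ↦ hBD hu (hD' hv), hD'B.symm, rfl⟩]
  · exact pairwise_disjoint_vec_three disjoint_sdiff_right (hAB.mono_left hA')
      (hAB.mono_left sdiff_subset)
  · exact pairwise_disjoint_vec_three (hCD.mono_right sdiff_subset) (hCD.mono_right hD')
      disjoint_sdiff_left
  · exact fun i j ↦ hcompl.disjoint.mono (hP ▸ subset_iUnion _ i) (hQ ▸ subset_iUnion _ j)
  · simp only [Pi.sup_apply, sup_eq_union, iUnion_union_distrib, hP, hQ]
    exact hcompl.sup_eq_top

theorem exists_partition_three_bicliques_of_isSplitColouring {U W : Set V} (hUW : IsCompl U W)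
    (hG : G.IsCompleteBetween U W) (hcard : U.ncard = W.ncard) (hc : IsSplitColouring G c U W) :
    ∃ S : Fin 3 → Set V, (∀ i, ∃ b, IsMonoBalancedBicliqueSet G c b (S i)) ∧
      Pairwise (Disjoint on S) ∧ ⋃ i, S i = univ := by
  obtain ⟨A, B, C, D, rfl, hAB, rfl, hCD, hblue, hred⟩ := hc
  have hAC : (monoSubgraph G c false).IsCompleteBetween A C := fun u hu v hv ↦
    have huv := hG (.inl hu) (.inl hv)
    monoSubgraph_adj.2 ⟨huv, hblue u v huv (by tauto)⟩
  have hBD : (monoSubgraph G c false).IsCompleteBetween B D := fun u hu v hv ↦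
    have huv := hG (.inr hu) (.inr hv)
    monoSubgraph_adj.2 ⟨huv, hblue u v huv (by tauto)⟩
  have hAD : (monoSubgraph G c true).IsCompleteBetween A D := fun u hu v hv ↦
    have huv := hG (.inl hu) (.inr hv)
    monoSubgraph_adj.2 ⟨huv, hred u v huv (by tauto)⟩
  have hBC : (monoSubgraph G c true).IsCompleteBetween B C := fun u hu v hv ↦
    have huv := hG (.inr hu) (.inl hv)
    monoSubgraph_adj.2 ⟨huv, hred u v huv (by tauto)⟩
  rcases le_total C.ncard A.ncard with hCA | hAC_le
  · exact exists_partition_three_bicliques_of_ncard_le hAB hCD hUW hcard hCA hAC hAD hBD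
  · have hDB : D.ncard ≤ B.ncard := by
      rw [ncard_union_eq hAB, ncard_union_eq hCD] at hcard
      lia
    rw [union_comm A, union_comm C] at hUW hcard
    exact exists_partition_three_bicliques_of_ncard_le hAB.symm hCD.symm hUW hcard hDB hBD hBC hAC

theorem stmt17_general {U W : Set V} (hUW : IsCompl U W) (hG : G.IsCompleteBetween U W)
    (hcard : U.ncard = W.ncard) (hc : IsSplitColouring G c U W) :
    (∃ S : Fin 3 → Set V, (∀ i, ∃ b, IsMonoPathSet G c b (S i)) ∧
      (∀ i j, i ≠ j → Disjoint (S i) (S j)) ∧ (⋃ i, S i) = Set.univ) ∧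
    (∃ S : Fin 3 → Set V, (∀ i, ∃ b, IsMonoCycleSet G c b (S i)) ∧
      (∀ i j, i ≠ j → Disjoint (S i) (S j)) ∧ (⋃ i, S i) = Set.univ) := by
  obtain ⟨S, hS, hdisj, hunion⟩ :=
    exists_partition_three_bicliques_of_isSplitColouring hUW hG hcard hc
  exact ⟨⟨S, fun i ↦ (hS i).imp fun _ h ↦ h.isMonoPathSet, fun _ _ h ↦ hdisj h, hunion⟩,
    ⟨S, fun i ↦ (hS i).imp fun _ h ↦ h.isMonoCycleSet, fun _ _ h ↦ hdisj h, hunion⟩⟩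

end Finite

theorem isCompl_setOf_eq_zero_one {α : Type*} (f : α → Fin 2) :
    IsCompl {a | f a = 0} {a | f a = 1} := by
  have hcompl : ({1} : Set (Fin 2)) = {0}ᶜ := by
    ext i
    fin_cases i <;> simp
  exact IsCompl.preimage f (hcompl ▸ isCompl_compl)

end

/-- The vertex set of a balanced complete bipartite graph with a proper split colouring
(both `||A|−|C|| ≥ 2` and `||B|−|D|| ≥ 2`) can be partitioned into the vertex sets of
three pairwise vertex-disjoint monochromatic paths, and also into the vertex sets of
three pairwise vertex-disjoint monochromatic cycles. -/
theorem stmt17 {V : Type*} [Fintype V]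
    (f : V → Fin 2) (hf : Function.Surjective f)
    (G : SimpleGraph V) (hG : ∀ x y, G.Adj x y ↔ f x ≠ f y)
    (hbal : ({w | f w = 0} : Set V).ncard = ({w | f w = 1} : Set V).ncard)
    (c : Sym2 V → Bool)
    (A B C D : Set V)
    (hAB : A ∪ B = {w | f w = 0}) (hABd : Disjoint A B)
    (hCD : C ∪ D = {w | f w = 1}) (hCDd : Disjoint C D)
    (hblue : ∀ u v, G.Adj u v →
      (((u ∈ A ∧ v ∈ C) ∨ (u ∈ C ∧ v ∈ A) ∨ (u ∈ B ∧ v ∈ D) ∨ (u ∈ D ∧ v ∈ B)) →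
        c s(u, v) = false))
    (hred : ∀ u v, G.Adj u v →
      (((u ∈ A ∧ v ∈ D) ∨ (u ∈ D ∧ v ∈ A) ∨ (u ∈ B ∧ v ∈ C) ∨ (u ∈ C ∧ v ∈ B)) →
        c s(u, v) = true))
    (hproperAC : 2 ≤ |(A.ncard : ℤ) - (C.ncard : ℤ)|)
    (hproperBD : 2 ≤ |(B.ncard : ℤ) - (D.ncard : ℤ)|) :
    (∃ S : Fin 3 → Set V, (∀ i, ∃ b, IsMonoPathSet G c b (S i)) ∧
      (∀ i j, i ≠ j → Disjoint (S i) (S j)) ∧ (⋃ i, S i) = Set.univ) ∧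
    (∃ S : Fin 3 → Set V, (∀ i, ∃ b, IsMonoCycleSet G c b (S i)) ∧
      (∀ i j, i ≠ j → Disjoint (S i) (S j)) ∧ (⋃ i, S i) = Set.univ) := by
  have hadj : G.IsCompleteBetween {w | f w = 0} {w | f w = 1} := fun u hu v hv ↦
    (hG u v).2 (by simp_all)
  exact stmt17_general (isCompl_setOf_eq_zero_one f) hadj hbal
    ⟨A, B, C, D, hAB, hABd, hCD, hCDd, hblue, hred⟩
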